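/- arXiv:2112.12081 — 2 statements merged into one kernel-verified Lean document; each statement's English description precedes it below -/
import Mathlib

section
/- For every real q with 0 < q < 1, (1 − β·R(q²)) / (1 − α·R(q²)) = ∏_{n=1}^∞ (1 + α·q^{2n/5} + q^{4n/5}) / (1 + β·q^{2n/5} + q^{4n/5}). -/
/-!
Put `x = q^(2/5)`, so that `q² = x⁵`, and let `a` be `α` or `β`; both satisfy `a² = a + 1`. A root
`ζ` of `ζ² + a ζ + 1` is a primitive fifth root of unity, and
`1 + a xⁿ + x²ⁿ = (1 - ζ xⁿ) (1 - ζ⁻¹ xⁿ)`. By the Jacobi triple product (`jacobi_triple`),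
`(1 - ζ) ∏ (1 - xⁿ) (1 + a xⁿ + x²ⁿ)` is the theta series `∑ (-ζ)^j x^(j (j - 1) / 2)` over `ℤ`.

Splitting this series by `j` modulo 5 (`dissection`) expresses it through two theta series in `x²⁵`,
which the triple product turns back into products. They are `(x²⁵; x²⁵)_∞` times the denominator
and the numerator of `R(x⁵)`. The outcome (`theta_factor_real`) is
`∏ (1 - xⁿ) (1 + a xⁿ + x²ⁿ) = C (1 - (1 - a) R(x⁵))` with `C` independent of `a`. Since
`1 - α = β` and `1 - β = α`, dividing the identity for `α` by the one for `β` gives the theorem.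

The triple product itself is the limit of its finite form (`finite_jtp`), a shifted Gaussian binomial
theorem, by dominated convergence for series.
-/


open Real

/-- The Rogers–Ramanujan continued fraction value, via its product expansion,
for real `q` with `0 < q < 1`. -/
noncomputable def rrcf (q : ℝ) : ℝ :=
  q ^ ((1 : ℝ)/5) *
    ∏' n : ℕ,
      (1 - q ^ (5*(n+1) - 1)) * (1 - q ^ (5*(n+1) - 4)) /
      ((1 - q ^ (5*(n+1) - 2)) * (1 - q ^ (5*(n+1) - 3)))

/-- Jacobi's second theta function `θ₂(z; q)` for real `z` and `0 < q < 1`. -/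
noncomputable def theta2 (z q : ℝ) : ℝ :=
  2 * ∑' n : ℕ, q ^ (((n : ℝ) + 1/2)^2) * Real.cos ((2*(n : ℝ) + 1) * z)

/-- Ramanujan's function `f(-q) = ∑_{n ∈ ℤ} (-1)^n q^{n(3n-1)/2}`. -/
noncomputable def fneg (q : ℝ) : ℝ :=
  ∑' n : ℤ, (-1 : ℝ) ^ n * q ^ (n * (3*n - 1) / 2)

/-- The golden-ratio conjugate `α = (1 - √5)/2`. -/
noncomputable def alphaRR : ℝ := (1 - Real.sqrt 5) / 2

/-- The golden ratio `β = (1 + √5)/2`. -/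
noncomputable def betaRR : ℝ := (1 + Real.sqrt 5) / 2

open Filter Topology

/-! ### Finite products and the Gaussian binomial theorem -/

/-- The finite `x`-Pochhammer symbol `(a; x)_N = ∏_{k < N} (1 - a x^k)`. -/
noncomputable def qp (a x : ℂ) (N : ℕ) : ℂ := ∏ k ∈ Finset.range N, (1 - a * x ^ k)

/-- The infinite `x`-Pochhammer symbol `(a; x)_∞`. -/
noncomputable def qpInf (a x : ℂ) : ℂ := ∏' k : ℕ, (1 - a * x ^ k)

/-- The Gaussian binomial coefficient `[M, j]_x`, given by the Pascal recursion
`[M + 1, j + 1] = [M, j + 1] + x^(M - j) [M, j]`. The truncated subtraction is harmless because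
`[M, j] = 0` for `j > M`. -/
def gbin (x : ℂ) : ℕ → ℕ → ℂ
  | _, 0 => 1
  | 0, _ + 1 => 0
  | M + 1, j + 1 => gbin x M (j + 1) + x ^ (M - j) * gbin x M j

/-- The exponent `j (j - 1) / 2` of the theta series; the integer division is exact. -/
def tri (j : ℤ) : ℤ := j * (j - 1) / 2

lemma two_tri (j : ℤ) : 2 * tri j = j * (j - 1) :=
  Int.mul_ediv_cancel' (Int.even_mul_pred_self j).two_dvd

lemma gbin_eq_zero (x : ℂ) : ∀ {M j : ℕ}, M < j → gbin x M j = 0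
  | 0, j + 1, _ => by simp [gbin]
  | M + 1, j + 1, h => by
    simp [gbin, gbin_eq_zero x (show M < j + 1 by omega), gbin_eq_zero x (show M < j by omega)]

lemma gbin_zero (x : ℂ) (M : ℕ) : gbin x M 0 = 1 := by cases M <;> simp [gbin]

/-- The product formula `[M, j]_x = (x; x)_M / ((x; x)_j (x; x)_(M-j))`, free of division. -/
lemma gbin_mul (x : ℂ) : ∀ {M j : ℕ}, j ≤ M → gbin x M j * (qp x x j * qp x x (M - j)) = qp x x M
  | M, 0, _ => by simp [gbin_zero, qp]
  | M + 1, j + 1, h => by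
    have hs : ∀ n, qp x x (n + 1) = qp x x n * (1 - x ^ (n + 1)) := fun n ↦ by
      simp [qp, Finset.prod_range_succ, pow_succ']
    have h1 := gbin_mul x (show j ≤ M by omega)
    rw [gbin, Nat.add_sub_add_right, add_mul]
    rcases (show j ≤ M by omega).eq_or_lt with rfl | hj
    · rw [gbin_eq_zero x (Nat.lt_succ_self j)]
      simp only [Nat.sub_self, pow_zero] at h1 ⊢
      rw [hs]; linear_combination (1 - x ^ (j + 1)) * h1
    · have h2 := gbin_mul x (show j + 1 ≤ M by omega)
      obtain ⟨d, rfl⟩ : ∃ d, M = j + 1 + d := ⟨M - (j + 1), by omega⟩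
      rw [show j + 1 + d - j = d + 1 by omega] at h1 ⊢
      rw [show j + 1 + d - (j + 1) = d by omega] at h2
      rw [hs (j + 1 + d)]
      rw [hs j] at h2 ⊢
      rw [hs d] at h1 ⊢
      have e : x ^ (j + 1 + d + 1) = x ^ (j + 1) * x ^ (d + 1) := by ring
      rw [e]
      linear_combination (1 - x ^ (d + 1)) * h2 + x ^ (d + 1) * (1 - x ^ (j + 1)) * h1

/-- The Gaussian binomial theorem for `∏_{k < M} (1 + w x^k)`. -/
lemma q_binomial (w x : ℂ) (M : ℕ) :
    qp (-w) x M = ∑ j ∈ Finset.range (M + 1), gbin x M j * x ^ (j.choose 2) * w ^ j := by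
  induction M with
  | zero => simp [qp, gbin]
  | succ M ih =>
    have hs : qp (-w) x (M + 1) = qp (-w) x M * (1 + w * x ^ M) := by
      simp [qp, Finset.prod_range_succ]
    rw [hs, mul_add, mul_one, Finset.sum_range_succ', gbin_zero]
    have hx : ∀ j ∈ Finset.range (M + 1),
        gbin x (M + 1) (j + 1) * x ^ ((j + 1).choose 2) * w ^ (j + 1) =
        gbin x M (j + 1) * x ^ ((j + 1).choose 2) * w ^ (j + 1) +
        gbin x M j * x ^ (j.choose 2) * w ^ j * (w * x ^ M) := by
      intro j hj
      have hj : j ≤ M := by simpa [Nat.lt_succ_iff] using hj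
      obtain ⟨d, rfl⟩ := Nat.exists_eq_add_of_le hj
      rw [gbin, Nat.choose_succ_succ' j 1, Nat.choose_one_right]
      simp only [Nat.add_sub_cancel_left]
      ring
    have ih' := ih
    rw [Finset.sum_range_succ'] at ih'
    rw [Finset.sum_congr rfl hx, Finset.sum_add_distrib, ← Finset.sum_mul, ← ih, ih',
      Finset.sum_range_succ (fun j ↦ gbin x M (j + 1) * x ^ ((j + 1).choose 2) * w ^ (j + 1)),
      gbin_eq_zero x (Nat.lt_succ_self M), gbin_zero]
    ring

/-! ### The Jacobi triple product -/

/-- The term `(-1)^j z^j x^(j (j - 1) / 2)` of the bilateral theta series. -/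
noncomputable def tterm (z x : ℂ) (j : ℤ) : ℂ := (-z) ^ j * x ^ tri j

lemma tri_succ (j : ℤ) : tri (j + 1) = tri j + j := by
  have h1 := two_tri j; have h2 := two_tri (j + 1)
  linarith

lemma tri_natCast (j : ℕ) : tri j = (j.choose 2 : ℕ) := by
  induction j with
  | zero => rfl
  | succ j ih =>
    push_cast [Nat.choose_succ_succ' j 1, Nat.choose_one_right]
    rw [tri_succ, ih]; ring

/-- The first `N` factors of `(z x^(-N); x)_{2N}`, rewritten through
`1 - z x^(-k) = -z x^(-k) (1 - x^k / z)`. -/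
lemma prod_reflect {z x : ℂ} (hx : x ≠ 0) (hz : z ≠ 0) (N : ℕ) :
    qp (z * x ^ (-(N : ℤ))) x N = (-z) ^ N * x ^ (-tri (N + 1)) * qp (x / z) x N := by
  have h : qp (z * x ^ (-(N : ℤ))) x N = ∏ k ∈ Finset.range N, (1 - z * x ^ (-((k : ℤ) + 1))) := by
    rw [qp, ← Finset.prod_range_reflect]
    refine Finset.prod_congr rfl fun k hk ↦ ?_
    have hk : k < N := by simpa using hk
    rw [mul_assoc, ← zpow_natCast x, ← zpow_add₀ hx]
    congr 3
    omega
  rw [h]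
  clear h
  induction N with
  | zero => simp [qp, tri]
  | succ N ih =>
    rw [Finset.prod_range_succ, ih]
    simp only [qp, Finset.prod_range_succ]
    push_cast
    have : (1 - z * x ^ (-((N : ℤ) + 1))) = -z * x ^ (-((N : ℤ) + 1)) * (1 - x / z * x ^ N) := by
      rw [zpow_neg, ← Nat.cast_succ, zpow_natCast]
      field_simp
      rw [pow_succ]; ring
    rw [this, tri_succ (N + 1), neg_add (tri _), zpow_add₀ hx, pow_succ]
    ring

/-- Finite form of the triple product: the Gaussian binomial theorem for `2 N` factors, shifted by
`N` so that the sum is centred at `0`. -/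
lemma finite_jtp {z x : ℂ} (hx : x ≠ 0) (hz : z ≠ 0) (N : ℕ) :
    qp z x N * qp (x / z) x N =
      ∑ i ∈ Finset.range (2 * N + 1), gbin x (2 * N) i * tterm z x ((i : ℤ) - N) := by
  have h1 := q_binomial (-(z * x ^ (-(N : ℤ)))) x (2 * N)
  rw [neg_neg] at h1
  have h2 : qp (z * x ^ (-(N : ℤ))) x (2 * N) = qp (z * x ^ (-(N : ℤ))) x N * qp z x N := by
    rw [two_mul]
    simp only [qp]
    rw [Finset.prod_range_add]
    congr 1
    refine Finset.prod_congr rfl fun k _ ↦ ?_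
    rw [pow_add, zpow_neg, zpow_natCast]
    field_simp
  rw [h2, prod_reflect hx hz] at h1
  have hz' : -z ≠ 0 := neg_ne_zero.2 hz
  have h3 : (-z) ^ N * x ^ (-tri (N + 1)) ≠ 0 := mul_ne_zero (pow_ne_zero _ hz') (zpow_ne_zero _ hx)
  apply mul_left_cancel₀ h3
  rw [mul_comm (qp z x N), ← mul_assoc, h1, Finset.mul_sum]
  refine Finset.sum_congr rfl fun i _ ↦ ?_
  have e : x ^ (i.choose 2) * (x ^ (-(N : ℤ))) ^ i = x ^ (-tri (N + 1)) * x ^ (tri (i - N)) := by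
    rw [← zpow_natCast x, ← tri_natCast, ← zpow_natCast (x ^ (-(N : ℤ))), ← zpow_mul,
      ← zpow_add₀ hx, ← zpow_add₀ hx]
    congr 1
    have h1 := two_tri i; have h2 := two_tri (N + 1); have h3 := two_tri (i - N)
    linarith
  rw [neg_mul_eq_neg_mul z, mul_pow, tterm, zpow_sub₀ hz', zpow_natCast, zpow_natCast]
  have : (-z) ^ N ≠ 0 := pow_ne_zero _ hz'
  field_simp
  linear_combination gbin x (2 * N) i * e

lemma summable_geo (a : ℂ) {x : ℂ} (hx : ‖x‖ < 1) : Summable fun k : ℕ ↦ ‖-(a * x ^ k)‖ := by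
  simp_rw [norm_neg, norm_mul, norm_pow]
  exact (summable_geometric_of_lt_one (norm_nonneg _) hx).mul_left _

lemma multipliable_qp (a : ℂ) {x : ℂ} (hx : ‖x‖ < 1) : Multipliable fun k : ℕ ↦ 1 - a * x ^ k := by
  simpa [sub_eq_add_neg] using multipliable_one_add_of_summable (summable_geo a hx)

lemma tendsto_qp (a : ℂ) {x : ℂ} (hx : ‖x‖ < 1) : Tendsto (qp a x) atTop (𝓝 (qpInf a x)) :=
  (multipliable_qp a hx).hasProd.tendsto_prod_nat

lemma one_sub_pow_ne_zero {x : ℂ} (hx : ‖x‖ < 1) (k : ℕ) : 1 - x * x ^ k ≠ 0 := by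
  rw [← pow_succ', sub_ne_zero]
  intro h
  have := congrArg norm h
  rw [norm_one, norm_pow] at this
  exact (pow_lt_one₀ (norm_nonneg x) hx (Nat.succ_ne_zero k)).ne this.symm

lemma qpInf_ne_zero {x : ℂ} (hx : ‖x‖ < 1) : qpInf x x ≠ 0 := by
  have := tprod_one_add_ne_zero_of_summable (f := fun k : ℕ ↦ -(x * x ^ k))
    (fun k ↦ by simpa [sub_eq_add_neg] using one_sub_pow_ne_zero hx k) (summable_geo x hx)
  simpa [sub_eq_add_neg, qpInf] using this

lemma qp_ne_zero {x : ℂ} (hx : ‖x‖ < 1) (N : ℕ) : qp x x N ≠ 0 :=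
  Finset.prod_ne_zero_iff.2 fun k _ ↦ one_sub_pow_ne_zero hx k

lemma gbin_eq {x : ℂ} (hx : ‖x‖ < 1) {M j : ℕ} (h : j ≤ M) :
    gbin x M j = qp x x M * (qp x x j)⁻¹ * (qp x x (M - j))⁻¹ := by
  have := qp_ne_zero hx j
  have := qp_ne_zero hx (M - j)
  field_simp
  rw [← gbin_mul x h, mul_assoc]

/-- The uniform bound that makes dominated convergence applicable to `finite_jtp`. -/
lemma gbin_bounded {x : ℂ} (hx : ‖x‖ < 1) : ∃ C : ℝ, ∀ M j, ‖gbin x M j‖ ≤ C := by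
  have h1 := tendsto_qp x hx
  obtain ⟨A, hA⟩ := (Metric.isBounded_range_of_tendsto _ h1).exists_norm_le
  obtain ⟨B, hB⟩ := (Metric.isBounded_range_of_tendsto _ (h1.inv₀ (qpInf_ne_zero hx))).exists_norm_le
  have hA0 : 0 ≤ A := (norm_nonneg _).trans (hA _ ⟨0, rfl⟩)
  have hB0 : 0 ≤ B := (norm_nonneg _).trans (hB _ ⟨0, rfl⟩)
  refine ⟨A * B * B, fun M j ↦ ?_⟩
  rcases le_or_gt j M with h | h
  · rw [gbin_eq hx h, norm_mul, norm_mul]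
    gcongr
    · exact hA _ ⟨_, rfl⟩
    · exact hB _ ⟨_, rfl⟩
    · exact hB _ ⟨_, rfl⟩
  · rw [gbin_eq_zero x h, norm_zero]; positivity

lemma summable_tterm {z x : ℂ} (hx0 : x ≠ 0) (hx : ‖x‖ < 1) (hz : z ≠ 0) :
    Summable (tterm z x) := by
  have hz' : -z ≠ 0 := neg_ne_zero.2 hz
  have hne : ∀ j, tterm z x j ≠ 0 := fun j ↦ mul_ne_zero (zpow_ne_zero _ hz') (zpow_ne_zero _ hx0)
  have hs : ∀ j, tterm z x (j + 1) = tterm z x j * (-z * x ^ j) := fun j ↦ by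
    rw [tterm, tterm, tri_succ, zpow_add₀ hx0, zpow_add_one₀ hz']; ring
  have hlim : ∀ c : ℂ, Tendsto (fun n : ℕ ↦ ‖c * x ^ n‖) atTop (𝓝 0) := fun c ↦ by
    simpa using ((tendsto_pow_atTop_nhds_zero_of_norm_lt_one hx).const_mul c).norm
  refine Summable.of_nat_of_neg_add_one ?_ ?_
  · refine summable_of_ratio_test_tendsto_lt_one zero_lt_one (.of_forall fun n ↦ hne _) ?_
    refine (hlim (-z)).congr fun n ↦ ?_
    push_cast
    rw [hs, norm_mul (tterm z x _), mul_div_cancel_left₀ _ (norm_ne_zero_iff.2 (hne _)), zpow_natCast]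
  · refine summable_of_ratio_test_tendsto_lt_one zero_lt_one (.of_forall fun n ↦ hne _) ?_
    refine (hlim (x ^ 2 / -z)).congr fun n ↦ ?_
    have h := hs (-((n : ℤ) + 1 + 1))
    rw [show -((n : ℤ) + 1 + 1) + 1 = -((n : ℤ) + 1) by ring] at h
    push_cast
    rw [h, norm_mul (tterm z x _), div_mul_eq_div_div, div_self (norm_ne_zero_iff.2 (hne _)), one_div,
      ← norm_inv]
    congr 1
    rw [show -((n : ℤ) + 1 + 1) = -((n + 2 : ℕ) : ℤ) by push_cast; ring, zpow_neg, zpow_natCast]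
    field_simp
    ring

/-- The Jacobi triple product identity, obtained from `finite_jtp` as `N → ∞`, where each Gaussian
binomial coefficient tends to `1 / (x; x)_∞`. -/
theorem jacobi_triple {z x : ℂ} (hx0 : x ≠ 0) (hx : ‖x‖ < 1) (hz : z ≠ 0) :
    ∑' j, tterm z x j = qpInf x x * qpInf z x * qpInf (x / z) x := by
  have hlhs : Tendsto (fun N ↦ qp z x N * qp (x / z) x N) atTop
      (𝓝 (qpInf z x * qpInf (x / z) x)) := (tendsto_qp z hx).mul (tendsto_qp _ hx)
  obtain ⟨C, hC⟩ := gbin_bounded hx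
  -- The terms of the finite identity as functions on all of `ℤ`; the guard is needed since `toNat`
  -- sends negative integers to `0`.
  let F : ℕ → ℤ → ℂ := fun N j ↦
    (if -(N : ℤ) ≤ j then gbin x (2 * N) (j + N).toNat else 0) * tterm z x j
  have hF : ∀ N, ∑' j, F N j = qp z x N * qp (x / z) x N := by
    intro N
    let e : ℕ ↪ ℤ := ⟨fun i ↦ (i : ℤ) - N, fun a b h ↦ by simpa using h⟩
    rw [finite_jtp hx0 hz, tsum_eq_sum (s := (Finset.range (2 * N + 1)).map e), Finset.sum_map]
    · refine Finset.sum_congr rfl fun i _ ↦ ?_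
      have : e i = (i : ℤ) - N := rfl
      simp [F, this]
    · intro j hj
      by_cases h : -(N : ℤ) ≤ j
      · have : 2 * N < (j + N).toNat := by
          by_contra! h'
          refine hj (Finset.mem_map.2 ⟨(j + N).toNat, by simpa [Nat.lt_succ_iff] using h', ?_⟩)
          change ((j + N).toNat : ℤ) - N = j
          omega
        simp [F, gbin_eq_zero x this]
      · simp [F, h]
  have hE := qpInf_ne_zero hx
  have hq := tendsto_qp x hx
  have hmain : Tendsto (fun N ↦ ∑' j, F N j) atTop (𝓝 (∑' j, (qpInf x x)⁻¹ * tterm z x j)) := by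
    refine tendsto_tsum_of_dominated_convergence (bound := fun j ↦ C * ‖tterm z x j‖)
      ((summable_tterm hx0 hx hz).norm.mul_left _) (fun j ↦ ?_) (.of_forall fun N j ↦ ?_)
    · refine Tendsto.mul_const _ ?_
      have h1 : Tendsto (fun N : ℕ ↦ 2 * N) atTop atTop :=
        tendsto_id.const_mul_atTop' two_pos
      have h2 : Tendsto (fun N : ℕ ↦ (j + N).toNat) atTop atTop :=
        tendsto_atTop.2 fun b ↦ by
          filter_upwards [eventually_ge_atTop (b + j.natAbs)] with N hN; omega
      have h3 : Tendsto (fun N : ℕ ↦ 2 * N - (j + N).toNat) atTop atTop :=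
        tendsto_atTop.2 fun b ↦ by
          filter_upwards [eventually_ge_atTop (b + j.natAbs)] with N hN; omega
      have h4 := ((hq.comp h1).mul ((hq.comp h2).inv₀ hE)).mul ((hq.comp h3).inv₀ hE)
      rw [mul_inv_cancel₀ hE, one_mul] at h4
      refine h4.congr' ?_
      filter_upwards [eventually_ge_atTop j.natAbs] with N hN
      rw [if_pos (by omega), gbin_eq hx (by omega)]
      rfl
    · rw [norm_mul]
      gcongr
      split_ifs
      · exact hC _ _
      · simpa using (norm_nonneg _).trans (hC 0 0)
  simp_rw [hF] at hmain
  have := tendsto_nhds_unique hmain hlhs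
  rw [tsum_mul_left] at this
  rw [mul_assoc, ← this, mul_inv_cancel_left₀ hE]

/-! ### Dissection modulo 5 at a fifth root of unity -/

lemma tri_one_sub (j : ℤ) : tri (1 - j) = tri j := by
  have h1 := two_tri j; have h2 := two_tri (1 - j)
  linarith

lemma tterm_one_sub {z x : ℂ} (hz : z ≠ 0) (j : ℤ) :
    tterm z x (1 - j) = (-z) ^ (1 - 2 * j) * tterm z x j := by
  rw [tterm, tterm, tri_one_sub, ← mul_assoc, ← zpow_add₀ (neg_ne_zero.2 hz)]
  congr 2; ring

lemma tsum_residues {f : ℤ → ℂ} (hf : Summable f) :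
    ∑' j, f j = ∑' m, f (5 * m) + ∑' m, f (5 * m + 1) + ∑' m, f (5 * m + 2) +
      ∑' m, f (5 * m + 3) + ∑' m, f (5 * m + 4) := by
  have hs : Summable fun p : Fin 5 × ℤ ↦ f (p.2 * 5 + p.1) :=
    ((Equiv.prodComm (Fin 5) ℤ).trans (Int.divModEquiv 5).symm).summable_iff.2 hf
  have h := ((Equiv.prodComm (Fin 5) ℤ).trans (Int.divModEquiv 5).symm).tsum_eq f
  rw [← h]
  change ∑' p : Fin 5 × ℤ, f (p.2 * 5 + p.1) = _
  rw [hs.tsum_prod, tsum_fintype, Fin.sum_univ_five]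
  simp [mul_comm]

/-- The theta series at a fifth root of unity, split by residues modulo 5. The reflection
`j ↦ 1 - j` preserves the exponent `tri j`; it exchanges the residue classes 0 and 1, exchanges 2
and 4, and maps class 3 to itself with a change of sign, so that class 3 contributes `0`. -/
lemma dissection {ζ x : ℂ} (hx0 : x ≠ 0) (hx : ‖x‖ < 1) (hζ : ζ ^ 5 = 1) :
    ∑' j, tterm ζ x j = (1 - ζ) * ∑' m, tterm (x ^ 10) (x ^ 25) m +
      (ζ ^ 2 - ζ ^ 4) * (x * ∑' m, tterm (x ^ 20) (x ^ 25) m) := by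
  have hζ0 : ζ ≠ 0 := by rintro rfl; norm_num at hζ
  have hn0 : -ζ ≠ 0 := neg_ne_zero.2 hζ0
  have h5 : (-ζ) ^ (5 : ℤ) = -1 := by
    rw [show (5 : ℤ) = (5 : ℕ) by rfl, zpow_natCast]; linear_combination -hζ
  have hz5 : ∀ m : ℤ, (-ζ) ^ (5 * m) = (-1) ^ m := fun m ↦ by rw [zpow_mul, h5]
  have h10 : ∀ m : ℤ, (-ζ) ^ (10 * m) = 1 := fun m ↦ by
    rw [show 10 * m = 5 * (2 * m) by ring, hz5, zpow_mul]; norm_num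
  have h0 : ∀ m, tterm ζ x (5 * m) = tterm (x ^ 10) (x ^ 25) m := fun m ↦ by
    rw [tterm, tterm, hz5, neg_eq_neg_one_mul (x ^ 10), mul_zpow, ← zpow_natCast x, ← zpow_natCast x,
      ← zpow_mul, ← zpow_mul, mul_assoc, ← zpow_add₀ hx0]
    congr 2
    have h1 := two_tri (5 * m); have h2 := two_tri m
    push_cast; linarith
  have h2 : ∀ m, tterm ζ x (5 * m + 2) = ζ ^ 2 * x * tterm (x ^ 20) (x ^ 25) m := fun m ↦ by
    rw [tterm, tterm, zpow_add₀ hn0, hz5, neg_eq_neg_one_mul (x ^ 20), mul_zpow,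
      ← zpow_natCast x, ← zpow_natCast x, ← zpow_mul, ← zpow_mul]
    have : x ^ tri (5 * m + 2) = x * (x ^ (((20 : ℕ) : ℤ) * m) * x ^ (((25 : ℕ) : ℤ) * tri m)) := by
      rw [← zpow_add₀ hx0, ← zpow_one_add₀ hx0]
      congr 1
      have h1 := two_tri (5 * m + 2); have h2 := two_tri m
      push_cast; linarith
    rw [this, show (-ζ) ^ (2 : ℤ) = ζ ^ 2 by rw [zpow_ofNat, neg_sq]]
    ring
  have h1 : ∀ m, tterm ζ x (5 * -m + 1) = -ζ * tterm ζ x (5 * m) := fun m ↦ by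
    rw [show 5 * -m + 1 = 1 - 5 * m by ring, tterm_one_sub hζ0,
      show 1 - 2 * (5 * m) = 1 + 10 * -m by ring, zpow_add₀ hn0, h10]
    simp
  have h3 : ∀ m, tterm ζ x (5 * (-1 - m) + 3) = - tterm ζ x (5 * m + 3) := fun m ↦ by
    rw [show 5 * (-1 - m) + 3 = 1 - (5 * m + 3) by ring, tterm_one_sub hζ0,
      show 1 - 2 * (5 * m + 3) = 5 * -1 + 10 * -m by ring, zpow_add₀ hn0, h10, hz5]
    simp
  have h4 : ∀ m, tterm ζ x (5 * (-1 - m) + 4) = -ζ ^ 2 * tterm ζ x (5 * m + 2) := fun m ↦ by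
    rw [show 5 * (-1 - m) + 4 = 1 - (5 * m + 2) by ring, tterm_one_sub hζ0,
      show 1 - 2 * (5 * m + 2) = 5 * -1 + 2 + 10 * -m by ring, zpow_add₀ hn0, h10,
      zpow_add₀ hn0, hz5, zpow_ofNat]
    simp
  have s1 : ∑' m, tterm ζ x (5 * m + 1) = -ζ * ∑' m, tterm ζ x (5 * m) := by
    rw [← (Equiv.neg ℤ).tsum_eq, ← tsum_mul_left]
    exact tsum_congr h1
  have s3 : ∑' m, tterm ζ x (5 * m + 3) = - ∑' m, tterm ζ x (5 * m + 3) := by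
    rw [← tsum_neg]
    nth_rewrite 1 [← (Equiv.subLeft (-1 : ℤ)).tsum_eq]
    exact tsum_congr h3
  have s4 : ∑' m, tterm ζ x (5 * m + 4) = -ζ ^ 2 * ∑' m, tterm ζ x (5 * m + 2) := by
    rw [← (Equiv.subLeft (-1 : ℤ)).tsum_eq, ← tsum_mul_left]
    exact tsum_congr h4
  rw [tsum_residues (summable_tterm hx0 hx hζ0), self_eq_neg.1 s3, s4, s1, tsum_congr h0,
    tsum_congr h2, tsum_mul_left]
  ring

lemma qpInf_ne_zero' {a x : ℂ} (ha : ‖a‖ < 1) (hx : ‖x‖ < 1) : qpInf a x ≠ 0 := by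
  have := tprod_one_add_ne_zero_of_summable (f := fun k : ℕ ↦ -(a * x ^ k))
    (fun k h ↦ by
      have h := congrArg norm (show a * x ^ k = 1 by linear_combination -h)
      rw [norm_mul, norm_pow, norm_one] at h
      have : ‖a‖ * ‖x‖ ^ k ≤ ‖a‖ :=
        mul_le_of_le_one_right (norm_nonneg _) (pow_le_one₀ (norm_nonneg _) hx.le)
      linarith) (summable_geo a hx)
  simpa [sub_eq_add_neg, qpInf] using this

/-! ### Identification with the continued fraction -/

/-- The product `x (x²⁰; x²⁵)_∞ (x⁵; x²⁵)_∞`, the numerator of `R(x⁵)`. -/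
noncomputable def rrNum (x : ℂ) : ℂ := x * (qpInf (x ^ 20) (x ^ 25) * qpInf (x ^ 5) (x ^ 25))

/-- The product `(x¹⁰; x²⁵)_∞ (x¹⁵; x²⁵)_∞`, the denominator of `R(x⁵)`. -/
noncomputable def rrDen (x : ℂ) : ℂ := qpInf (x ^ 10) (x ^ 25) * qpInf (x ^ 15) (x ^ 25)

/-- For `a = α` or `a = β`, the roots of `ζ² + a ζ + 1` are primitive fifth roots of unity. -/
lemma exists_zeta {a : ℂ} (ha : a ^ 2 = a + 1) :
    ∃ ζ : ℂ, ζ ^ 2 + a * ζ + 1 = 0 ∧ ζ ^ 5 = 1 ∧ ζ ≠ 1 := by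
  obtain ⟨s, hs⟩ := IsAlgClosed.exists_eq_mul_self (a ^ 2 - 4)
  have h : ((-a + s) / 2) ^ 2 + a * ((-a + s) / 2) + 1 = 0 := by linear_combination -hs / 4
  refine ⟨(-a + s) / 2, h, ?_, ?_⟩
  all_goals generalize (-a + s) / 2 = ζ at h
  · linear_combination (ζ ^ 3 - a * ζ ^ 2 + a * ζ - 1) * h + (ζ ^ 3 - ζ ^ 2) * ha
  · rintro rfl
    have : a = -2 := by linear_combination h
    subst this
    norm_num at ha

/-- The triple product at `z = ζ`, where `ζ + ζ⁻¹ = -a`, compared with its dissection modulo 5.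
After dividing by `1 - ζ`, the coefficient of the second theta series is `ζ² + ζ³ = -(1 - a)`. -/
lemma theta_factor {a x : ℂ} (ha : a ^ 2 = a + 1) (hx0 : x ≠ 0) (hx : ‖x‖ < 1) :
    qpInf x x * ∏' n : ℕ, (1 + a * x ^ (n + 1) + (x ^ (n + 1)) ^ 2) =
      qpInf (x ^ 25) (x ^ 25) * (rrDen x - (1 - a) * rrNum x) := by
  obtain ⟨ζ, hq, h5, h1⟩ := exists_zeta ha
  have hζ0 : ζ ≠ 0 := by rintro rfl; norm_num at h5
  have hX0 : x ^ 25 ≠ 0 := pow_ne_zero _ hx0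
  have hX : ‖x ^ 25‖ < 1 := by
    rw [norm_pow]; exact pow_lt_one₀ (norm_nonneg _) hx (by norm_num)
  have d := dissection hx0 hx h5
  rw [jacobi_triple hx0 hx hζ0, jacobi_triple hX0 hX (pow_ne_zero 10 hx0),
    jacobi_triple hX0 hX (pow_ne_zero 20 hx0),
    show x ^ 25 / x ^ 10 = x ^ 15 by field_simp, show x ^ 25 / x ^ 20 = x ^ 5 by field_simp] at d
  have e1 : qpInf ζ x = (1 - ζ) * qpInf (ζ * x) x := by
    have hc : (fun k : ℕ ↦ 1 - ζ * x ^ (k + 1)) = fun k ↦ 1 - ζ * x * x ^ k :=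
      funext fun k ↦ by ring
    have hm : Multipliable fun k : ℕ ↦ 1 - ζ * x ^ (k + 1) := hc ▸ multipliable_qp (ζ * x) hx
    rw [qpInf, tprod_eq_zero_mul' (f := fun k : ℕ ↦ 1 - ζ * x ^ k) hm, qpInf, hc, pow_zero, mul_one]
  have e2 : ∏' n : ℕ, (1 + a * x ^ (n + 1) + (x ^ (n + 1)) ^ 2) =
      qpInf (ζ * x) x * qpInf (x / ζ) x := by
    rw [qpInf, qpInf, ← (multipliable_qp _ hx).tprod_mul (multipliable_qp _ hx)]
    refine tprod_congr fun n ↦ ?_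
    field_simp
    linear_combination x * x ^ n * hq
  rw [e1] at d
  rw [e2]
  apply mul_left_cancel₀ (sub_ne_zero.2 (Ne.symm h1))
  rw [rrDen, rrNum]
  linear_combination d +
    qpInf (x ^ 25) (x ^ 25) * x * qpInf (x ^ 20) (x ^ 25) * qpInf (x ^ 5) (x ^ 25) *
      ((ζ + 1 - a) * (1 - ζ) * hq + (ζ - ζ ^ 2) * ha)

lemma rrcf_cast {x : ℝ} (hx0 : 0 < x) (hx1 : x < 1) :
    (rrcf (x ^ 5) : ℂ) = rrNum x / rrDen x := by
  have hx : ‖(x : ℂ)‖ < 1 := by rwa [Complex.norm_real, Real.norm_of_nonneg hx0.le]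
  have hp : ∀ n ≠ 0, ‖(x : ℂ) ^ n‖ < 1 := fun n hn ↦ by
    rw [norm_pow]; exact pow_lt_one₀ (norm_nonneg _) hx hn
  have hX := hp 25 (by norm_num)
  have hm := fun a : ℂ ↦ (multipliable_qp a hX).hasProd
  have hP := ((hm ((x : ℂ) ^ 20)).mul (hm ((x : ℂ) ^ 5))).div₀
    ((hm ((x : ℂ) ^ 15)).mul (hm ((x : ℂ) ^ 10)))
    (mul_ne_zero (qpInf_ne_zero' (hp 15 (by norm_num)) hX)
      (qpInf_ne_zero' (hp 10 (by norm_num)) hX))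
  have hc := Topology.IsClosedEmbedding.map_tprod (g := Complex.ofRealHom) (L := .unconditional ℕ)
    (fun n : ℕ ↦ (1 - (x ^ 5) ^ (5*(n+1) - 1)) * (1 - (x ^ 5) ^ (5*(n+1) - 4)) /
      ((1 - (x ^ 5) ^ (5*(n+1) - 2)) * (1 - (x ^ 5) ^ (5*(n+1) - 3))))
    Complex.isometry_ofReal.isClosedEmbedding
  rw [rrcf, ← Real.rpow_natCast x 5, ← Real.rpow_mul hx0.le]
  norm_num
  simp only [Complex.ofRealHom_eq_coe] at hc
  rw [hc, rrNum, rrDen, mul_comm (qpInf (_ ^ 10) _), mul_div_assoc]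
  simp only [qpInf]
  rw [← hP.tprod_eq]
  congr 1
  refine tprod_congr fun n ↦ ?_
  rw [show 5 * (n + 1) - 1 = 5 * n + 4 by omega, show 5 * (n + 1) - 4 = 5 * n + 1 by omega,
    show 5 * (n + 1) - 2 = 5 * n + 3 by omega, show 5 * (n + 1) - 3 = 5 * n + 2 by omega]
  push_cast
  ring_nf

lemma summable_quad (a : ℝ) {x : ℝ} (hx0 : 0 < x) (hx1 : x < 1) :
    Summable fun n : ℕ ↦ ‖a * x ^ (n + 1) + (x ^ (n + 1)) ^ 2‖ := by
  have h := summable_geometric_of_lt_one hx0.le hx1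
  refine ((h.mul_left (|a| + 1))).of_nonneg_of_le (fun _ ↦ norm_nonneg _) fun n ↦ ?_
  have h1 : x ^ (n + 1) ≤ x ^ n := pow_le_pow_of_le_one hx0.le hx1.le (Nat.le_succ n)
  have h2 : x ^ (n + 1) ≤ 1 := pow_le_one₀ hx0.le hx1.le
  have h3 : 0 ≤ x ^ (n + 1) := by positivity
  calc ‖a * x ^ (n + 1) + (x ^ (n + 1)) ^ 2‖ ≤ |a| * x ^ (n + 1) + (x ^ (n + 1)) ^ 2 := by
        refine (norm_add_le _ _).trans_eq ?_
        rw [norm_mul, Real.norm_of_nonneg h3, Real.norm_of_nonneg (sq_nonneg _), Real.norm_eq_abs]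
    _ ≤ |a| * x ^ n + x ^ n := by gcongr; nlinarith
    _ = _ := by ring

/-- `theta_factor` for real parameters, with the right-hand side expressed through `rrcf`. -/
lemma theta_factor_real {a x : ℝ} (ha : a ^ 2 = a + 1) (hx0 : 0 < x) (hx1 : x < 1) :
    qpInf x x * ((∏' n : ℕ, (1 + a * x ^ (n + 1) + (x ^ (n + 1)) ^ 2) : ℝ) : ℂ) =
      qpInf (x ^ 25) (x ^ 25) * rrDen x * (1 - (1 - a) * rrcf (x ^ 5) : ℝ) := by
  have hx : ‖(x : ℂ)‖ < 1 := by rwa [Complex.norm_real, Real.norm_of_nonneg hx0.le]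
  have hp : ∀ n ≠ 0, ‖(x : ℂ) ^ n‖ < 1 := fun n hn ↦ by
    rw [norm_pow]; exact pow_lt_one₀ (norm_nonneg _) hx hn
  have hD : rrDen x ≠ 0 := mul_ne_zero (qpInf_ne_zero' (hp 10 (by norm_num)) (hp 25 (by norm_num)))
    (qpInf_ne_zero' (hp 15 (by norm_num)) (hp 25 (by norm_num)))
  have h := theta_factor (a := a) (x := x) (by exact_mod_cast ha)
    (Complex.ofReal_ne_zero.2 hx0.ne') hx
  have hc := Topology.IsClosedEmbedding.map_tprod (g := Complex.ofRealHom) (L := .unconditional ℕ)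
    (fun n : ℕ ↦ (1 + a * x ^ (n + 1) + (x ^ (n + 1)) ^ 2)) Complex.isometry_ofReal.isClosedEmbedding
  simp only [Complex.ofRealHom_eq_coe] at hc
  rw [hc]
  push_cast
  rw [h, rrcf_cast hx0 hx1]
  field_simp

theorem rrcf_ratio_product (q : ℝ) (hq0 : 0 < q) (hq1 : q < 1) :
    (1 - betaRR * rrcf (q^2)) / (1 - alphaRR * rrcf (q^2)) =
      ∏' n : ℕ,
        (1 + alphaRR * q ^ ((2*((n : ℝ) + 1))/5) + q ^ ((4*((n : ℝ) + 1))/5)) /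
        (1 + betaRR * q ^ ((2*((n : ℝ) + 1))/5) + q ^ ((4*((n : ℝ) + 1))/5)) := by
  -- In the variable `x = q^(2/5)` all exponents become integers, and `q² = x⁵`.
  obtain ⟨x, hx⟩ : ∃ x : ℝ, x = q ^ ((2 : ℝ) / 5) := ⟨_, rfl⟩
  have hx0 : 0 < x := hx ▸ Real.rpow_pos_of_pos hq0 _
  have hx1 : x < 1 := hx ▸ Real.rpow_lt_one hq0.le hq1 (by norm_num)
  have e5 : q ^ 2 = x ^ 5 := by
    rw [hx, ← Real.rpow_mul_natCast hq0.le, ← Real.rpow_natCast]; norm_num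
  have e1 : ∀ n : ℕ, q ^ ((2*((n : ℝ) + 1))/5) = x ^ (n + 1) := fun n ↦ by
    rw [hx, ← Real.rpow_mul_natCast hq0.le]; congr 1; push_cast; ring
  have e2 : ∀ n : ℕ, q ^ ((4*((n : ℝ) + 1))/5) = (x ^ (n + 1)) ^ 2 := fun n ↦ by
    rw [← pow_mul, hx, ← Real.rpow_mul_natCast hq0.le]; congr 1; push_cast; ring
  simp_rw [e1, e2, e5]
  have h5 : √5 ^ 2 = (5 : ℝ) := Real.sq_sqrt (by norm_num)
  have hα : alphaRR ^ 2 = alphaRR + 1 := by rw [alphaRR]; linear_combination h5 / 4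
  have hβ : betaRR ^ 2 = betaRR + 1 := by rw [betaRR]; linear_combination h5 / 4
  have hαβ : 1 - alphaRR = betaRR := by rw [alphaRR, betaRR]; ring
  have hβα : 1 - betaRR = alphaRR := by rw [alphaRR, betaRR]; ring
  have hβ0 : 0 < betaRR := by rw [betaRR]; positivity
  have hm : ∀ a : ℝ, Multipliable fun n : ℕ ↦ 1 + a * x ^ (n + 1) + (x ^ (n + 1)) ^ 2 := fun a ↦ by
    simpa [add_assoc] using multipliable_one_add_of_summable (summable_quad a hx0 hx1)
  -- All factors with the golden ratio are at least `1`, so their infinite product is nonzero.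
  have hne : ∏' n : ℕ, (1 + betaRR * x ^ (n + 1) + (x ^ (n + 1)) ^ 2) ≠ 0 := by
    have := tprod_one_add_ne_zero_of_summable
      (f := fun n : ℕ ↦ betaRR * x ^ (n + 1) + (x ^ (n + 1)) ^ 2)
      (fun n ↦ by positivity) (summable_quad betaRR hx0 hx1)
    simpa [add_assoc] using this
  rw [(hm alphaRR).tprod_div₀ (hm betaRR) hne]
  have hx : ‖(x : ℂ)‖ < 1 := by rwa [Complex.norm_real, Real.norm_of_nonneg hx0.le]
  have hE : qpInf x x ≠ 0 := qpInf_ne_zero' hx hx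
  have tα := theta_factor_real hα hx0 hx1
  have tβ := theta_factor_real hβ hx0 hx1
  rw [hαβ] at tα
  rw [hβα] at tβ
  -- The nonvanishing of `1 - α R(x⁵)` is read off from that of the product for `β`.
  have hne' := mul_ne_zero hE (Complex.ofReal_ne_zero.2 hne)
  rw [tβ] at hne'
  have hR := right_ne_zero_of_mul hne'
  have hC := left_ne_zero_of_mul hne'
  rw [div_eq_div_iff (Complex.ofReal_ne_zero.1 hR) hne]
  apply Complex.ofReal_injective
  apply mul_left_cancel₀ (mul_ne_zero hE hC)
  rw [Complex.ofReal_mul, Complex.ofReal_mul]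
  linear_combination (qpInf (x ^ 25) (x ^ 25) * rrDen x) *
    ((1 - betaRR * rrcf (x ^ 5) : ℝ) * tβ - (1 - alphaRR * rrcf (x ^ 5) : ℝ) * tα)
end

section
/- For every real b > 0, R(e^{−2π/b}) = (−α) · (1 − β·R(e^{−2πb})) / (1 − α·R(e^{−2πb})). -/
/-!
Write `q = exp (-2πt)`. The Jacobi triple product with base `q ^ 5` turns the product defining
`rrcf q` into a quotient `A(t) / B(t)` of alternating Gaussian sums,
`A(t) = ∑ (-1)^k exp (-5πt (k + 3/10)²)` and `B(t) = ∑ (-1)^k exp (-5πt (k + 1/10)²)`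
(`rrcf_exp_eq`): the triple product constant cancels, and the factor `q ^ (1/5)` is the quotient
of the two terms with `k = 0`.

Splitting `k` by parity expresses `A` and `B` through Mathlib's Hurwitz kernels `evenKernel (j/20)`.
Poisson summation (`evenKernel_functional_equation`) followed by a splitting modulo `20`
(`evenKernel_eq_sum`) shows that `t ↦ 1/t` acts linearly on the pair `(A, B)`:
up to a common positive factor,
`B(1/t) = cos(π/10) B(t) + cos(3π/10) A(t)` and `A(1/t) = cos(3π/10) B(t) - cos(π/10) A(t)`
(`thetaB_inv`, `thetaA_inv`). Since `cos(3π/10) = -α cos(π/10)` and `αβ = -1`, dividing the two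
gives the fractional linear relation.

The triple product is obtained from its finite form `finite_triple_product`, whose coefficients
`(Q)_{2N} / ((Q)_{N-k} (Q)_{N+k})` are bounded and tend to `1 / (Q)_∞`, by dominated convergence.
-/

open Real

open Filter Topology HurwitzZeta

/-! ### Hurwitz kernels and residue classes -/

/-- A convergent sum over `ℤ` is the sum of its subsums over the residue classes modulo `n`. -/
lemma hasSum_eq_sum_residues {f : ℤ → ℝ} {S : ℝ} (hf : HasSum f S) (n : ℕ) [NeZero n]
    {g : Fin n → ℝ} (hg : ∀ j : Fin n, HasSum (fun k : ℤ => f (k * n + (j : ℕ))) (g j)) :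
    S = ∑ j, g j := by
  have h := (Int.divModEquiv n).symm.hasSum_iff.mpr hf
  have h2 := ((Equiv.prodComm (Fin n) ℤ).hasSum_iff).mpr h
  have h3 := h2.prod_fiberwise (g := g) (fun j => by simpa [Function.comp_def] using hg j)
  exact h3.unique (hasSum_fintype g)

lemma hasSum_cosKernel_real (a : ℝ) {t : ℝ} (ht : 0 < t) :
    HasSum (fun n : ℤ => Real.cos (2 * π * a * n) * rexp (-π * (n : ℝ) ^ 2 * t))
      (cosKernel a t) := by
  have h := Complex.hasSum_re (hasSum_int_cosKernel a ht)
  rw [Complex.ofReal_re] at h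
  refine h.congr_fun ?_ 
  intro n
  rw [Complex.re_mul_ofReal]
  congr 1
  have : (2 * π * Complex.I * a * n : ℂ) = ((2 * π * a * n : ℝ) : ℂ) * Complex.I := by
    push_cast; ring
  rw [this, Complex.exp_ofReal_mul_I_re]

/-- The character `n ↦ cos (2πcn/20)` only depends on `n` modulo `20`, and the Gaussian restricted
to the class of `j` is a shifted Gaussian at the scale `20² = 400`. -/
lemma cosKernel_eq_sum (c : ℤ) {y : ℝ} (hy : 0 < y) :
    cosKernel ((c / 20 : ℝ) : UnitAddCircle) y = ∑ j : Fin 20, Real.cos (π * c * (j : ℕ) / 10) *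
      evenKernel (((j : ℕ) / 20 : ℝ) : UnitAddCircle) (400 * y) := by
  refine hasSum_eq_sum_residues (hasSum_cosKernel_real (c / 20) hy) 20 fun j => ?_
  refine ((hasSum_int_evenKernel ((j : ℕ) / 20 : ℝ) (t := 400 * y) (by positivity)).mul_left
    (Real.cos (π * c * (j : ℕ) / 10))).congr_fun ?_
  intro k
  congr 1
  · rw [← Real.cos_add_int_mul_two_pi (π * c * (j : ℕ) / 10) (c * k)]
    congr 1
    push_cast
    ring
  · congr 1
    push_cast
    ring

/-! ### Alternating Gaussian sums -/

/-- The `k`-th term `(-1)^k exp (-πs (k + a)²)` of the alternating Gaussian sum. -/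
noncomputable def altGauss (a s : ℝ) (k : ℤ) : ℝ := (-1) ^ k * rexp (-π * s * (k + a) ^ 2)

/-- Even and odd `k` contribute the two kernels, with opposite signs. -/
lemma hasSum_altGauss (a : ℝ) {s : ℝ} (hs : 0 < s) :
    HasSum (altGauss a s) (evenKernel ((a / 2 : ℝ) : UnitAddCircle) (4 * s) -
      evenKernel (((a + 1) / 2 : ℝ) : UnitAddCircle) (4 * s)) := by
  have hsum : Summable (altGauss a s) := by
    refine Summable.of_norm ((hasSum_int_evenKernel a hs).summable.congr fun k => ?_)
    rw [altGauss, norm_mul, norm_zpow, norm_neg, norm_one, one_zpow, one_mul, Real.norm_eq_abs,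
      Real.abs_exp]
    ring_nf
  have h4 : 0 < 4 * s := by positivity
  have key := hasSum_eq_sum_residues hsum.hasSum 2
    (g := ![evenKernel ((a / 2 : ℝ) : UnitAddCircle) (4 * s),
      -evenKernel (((a + 1) / 2 : ℝ) : UnitAddCircle) (4 * s)]) ?_
  · rw [Fin.sum_univ_two] at key
    convert hsum.hasSum using 1
    rw [key]
    simp [sub_eq_add_neg]
  · intro j
    fin_cases j
    · refine (hasSum_int_evenKernel (a / 2) h4).congr_fun fun k => ?_
      simp only [altGauss]
      have : (-1 : ℝ) ^ (k * 2) = 1 := (even_two.mul_left k).neg_one_zpow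
      simp [this]
      ring_nf
    · refine (hasSum_int_evenKernel ((a + 1) / 2) h4).neg.congr_fun fun k => ?_
      simp only [altGauss]
      have : (-1 : ℝ) ^ (k * 2 + 1) = -1 := (even_two.mul_left k).add_one.neg_one_zpow
      simp [this]
      ring_nf

/-! ### The Jacobi triple product -/

/-- The `q`-Pochhammer symbol `(Q; Q)_n = ∏_{i=1}^n (1 - Q^i)`. -/
noncomputable def qPoch (Q : ℝ) (n : ℕ) : ℝ := ∏ i ∈ Finset.range n, (1 - Q ^ (i + 1))

/-- `1 / (Q; Q)_n`, extended by `0` to negative `n`; with this convention the recurrence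
`invPoch_sub_one` holds for every integer. -/
noncomputable def invPoch (Q : ℝ) (n : ℤ) : ℝ := if 0 ≤ n then (qPoch Q n.toNat)⁻¹ else 0

section
variable {Q : ℝ}

lemma one_sub_pow_pos (h0 : 0 < Q) (h1 : Q < 1) (i : ℕ) : 0 < 1 - Q ^ (i + 1) :=
  sub_pos.mpr (pow_lt_one₀ h0.le h1 i.succ_ne_zero)

lemma qPoch_pos (h0 : 0 < Q) (h1 : Q < 1) (n : ℕ) : 0 < qPoch Q n :=
  Finset.prod_pos fun i _ => one_sub_pow_pos h0 h1 i

lemma invPoch_sub_one (h0 : 0 < Q) (h1 : Q < 1) (n : ℤ) :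
    invPoch Q (n - 1) = invPoch Q n * (1 - Q ^ n) := by
  rcases lt_trichotomy n 0 with hn | rfl | hn
  · simp [invPoch, show ¬ (0 ≤ n) by omega, show ¬ (1 ≤ n) by omega]
  · simp [invPoch]
  · obtain ⟨m, rfl⟩ : ∃ m : ℕ, n = m + 1 := ⟨(n - 1).toNat, by omega⟩
    have h := (one_sub_pow_pos h0 h1 m).ne'
    have e : (1 - Q ^ ((m : ℤ) + 1)) = 1 - Q ^ (m + 1) := by norm_cast
    rw [e, invPoch, invPoch, if_pos (by omega), if_pos (by omega),
      show ((m : ℤ) + 1 - 1).toNat = m by omega, show ((m : ℤ) + 1).toNat = m + 1 by omega,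
      qPoch, qPoch, Finset.prod_range_succ, mul_inv, mul_assoc, inv_mul_cancel₀ h, mul_one]

/-- The coefficient `(Q)_{2N} / ((Q)_{N-k} (Q)_{N+k})` of the finite triple product, a Gaussian
binomial; it vanishes for `|k| > N`. -/
noncomputable def tripleCoeff (Q : ℝ) (N : ℕ) (k : ℤ) : ℝ :=
  qPoch Q (2 * N) * invPoch Q (N - k) * invPoch Q (N + k)

/-- With `a = Q^(N+1-k)` and `b = Q^(N+1+k)`, everything is a multiple of
`invPoch Q (N+1-k) * invPoch Q (N+1+k)` and the claim is the polynomial identity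
`(1 - ab)(1 - ab/Q) = (1 + ab/Q)(1 - a)(1 - b) + a(1 - b)(1 - b/Q) + b(1 - a)(1 - a/Q)`. -/
lemma tripleCoeff_succ (h0 : 0 < Q) (h1 : Q < 1) (N : ℕ) (k : ℤ) :
    tripleCoeff Q (N + 1) k = (1 + Q ^ (2 * N + 1)) * tripleCoeff Q N k
      + Q ^ ((N : ℤ) + 1 - k) * tripleCoeff Q N (k - 1)
      + Q ^ ((N : ℤ) + 1 + k) * tripleCoeff Q N (k + 1) := by
  have hQ := h0.ne'
  simp only [tripleCoeff]
  have e1 := invPoch_sub_one h0 h1 (N + 1 - k)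
  have e2 := invPoch_sub_one h0 h1 (N + 1 + k)
  have e3 := invPoch_sub_one h0 h1 (N + 1 - k - 1)
  have e4 := invPoch_sub_one h0 h1 (N + 1 + k - 1)
  rw [e1, zpow_sub_one₀ hQ] at e3
  rw [e2, zpow_sub_one₀ hQ] at e4
  have hab : Q ^ ((N : ℤ) + 1 - k) * Q ^ ((N : ℤ) + 1 + k) = Q ^ (2 * N + 2) := by
    rw [← zpow_add₀ hQ, ← zpow_natCast]; congr 1; push_cast; ring
  have hP : qPoch Q (2 * (N + 1)) =
      qPoch Q (2 * N) * (1 - Q ^ (2 * N + 1)) * (1 - Q ^ (2 * N + 2)) := by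
    rw [qPoch, show 2 * (N + 1) = 2 * N + 1 + 1 by ring, Finset.prod_range_succ,
      Finset.prod_range_succ, qPoch]
  have hab' : Q ^ (2 * N + 1) = Q ^ ((N : ℤ) + 1 - k) * Q ^ ((N : ℤ) + 1 + k) * Q⁻¹ := by
    rw [hab]; field_simp; ring
  rw [hP, hab', ← hab]
  push_cast
  rw [show (N : ℤ) - k = N + 1 - k - 1 by ring, show (N : ℤ) + k = N + 1 + k - 1 by ring,
    show (N : ℤ) - (k - 1) = N + 1 - k by ring, show (N : ℤ) + (k - 1) = N + 1 + k - 1 - 1 by ring,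
    show (N : ℤ) - (k + 1) = N + 1 - k - 1 - 1 by ring, show (N : ℤ) + (k + 1) = N + 1 + k by ring,
    e3, e4, e1, e2]
  ring

/-- Finite form of the triple product. The weights `w k = (-x)^k Q^(k(k-1)/2) * w 0` enter only
through their recurrence, which avoids half-integral exponents. -/
lemma finite_triple_product (h0 : 0 < Q) (h1 : Q < 1) {x : ℝ} (hx : x ≠ 0) {w : ℤ → ℝ}
    (hw : ∀ k, w (k + 1) = -x * Q ^ k * w k) (N : ℕ) :
    HasSum (fun k => tripleCoeff Q N k * w k)
      ((∏ j ∈ Finset.range N, (1 - x * Q ^ j) * (1 - Q ^ (j + 1) / x)) * w 0) := by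
  have hQ := h0.ne'
  induction N with
  | zero =>
    rw [Finset.prod_range_zero]
    convert hasSum_single (f := fun k => tripleCoeff Q 0 k * w k) 0 ?_ using 1
    · simp [tripleCoeff, invPoch, qPoch]
    · intro k hk
      rcases lt_or_gt_of_ne hk with h | h
      · simp [tripleCoeff, invPoch, not_le.mpr h]
      · simp [tripleCoeff, invPoch, not_le.mpr h]
  | succ N ih =>
    -- Multiplying by `(1 - x Q^N)(1 - Q^(N+1)/x)` combines the series with its two unit shifts.
    have hdown := (Equiv.subRight (1 : ℤ)).hasSum_iff.mpr ih
    have hup := (Equiv.addRight (1 : ℤ)).hasSum_iff.mpr ih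
    have h := ((ih.mul_left (1 + Q ^ (2 * N + 1))).add (hdown.mul_left (-x * Q ^ N))).add
      (hup.mul_left (-Q ^ (N + 1) / x))
    have hval : ∀ P : ℝ, (1 + Q ^ (2 * N + 1)) * (P * w 0) + -x * Q ^ N * (P * w 0)
        + -Q ^ (N + 1) / x * (P * w 0)
          = P * ((1 - x * Q ^ N) * (1 - Q ^ (N + 1) / x)) * w 0 := fun P => by
      field_simp
      ring
    rw [hval, ← Finset.prod_range_succ] at h
    refine h.congr_fun fun k => ?_
    have hk := hw (k - 1)
    rw [sub_add_cancel] at hk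
    simp only [Function.comp, Equiv.coe_addRight, Equiv.subRight_apply]
    rw [tripleCoeff_succ h0 h1, hw k]
    have e1 : Q ^ ((N : ℤ) + 1 - k) * w k = -x * Q ^ N * w (k - 1) := by
      rw [hk, show (N : ℤ) + 1 - k = N - (k - 1) by ring, zpow_sub₀ hQ, zpow_natCast]
      field_simp
    have e2 : Q ^ ((N : ℤ) + 1 + k) * w k = -Q ^ (N + 1) / x * (-x * Q ^ k * w k) := by
      rw [zpow_add₀ hQ]
      norm_cast
      field_simp
    linear_combination tripleCoeff Q N (k - 1) * e1 + tripleCoeff Q N (k + 1) * e2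

lemma multipliable_one_sub_geom (h0 : 0 < Q) (h1 : Q < 1) (x : ℝ) :
    Multipliable fun j : ℕ => 1 - x * Q ^ j := by
  simp_rw [sub_eq_add_neg]
  exact Real.multipliable_one_add_of_summable
    ((summable_geometric_of_lt_one h0.le h1).mul_left x).neg

lemma tprod_one_sub_geom_pos (h0 : 0 < Q) (h1 : Q < 1) {x : ℝ} (hx0 : 0 < x) (hx : x < 1) :
    0 < ∏' j : ℕ, (1 - x * Q ^ j) := by
  have hpos (j : ℕ) : 0 < 1 - x * Q ^ j := by
    have : Q ^ j ≤ 1 := pow_le_one₀ h0.le h1.le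
    nlinarith [pow_pos h0 j]
  refine lt_of_le_of_ne (ge_of_tendsto' (multipliable_one_sub_geom h0 h1 x).hasProd.tendsto_prod_nat
    fun n => Finset.prod_nonneg fun j _ => (hpos j).le) (Ne.symm ?_)
  simp_rw [sub_eq_add_neg] at hpos ⊢
  exact tprod_one_add_ne_zero_of_summable (fun j => (hpos j).ne')
    ((summable_geometric_of_lt_one h0.le h1).mul_left x).neg.norm

lemma exists_tendsto_qPoch (h0 : 0 < Q) (h1 : Q < 1) :
    ∃ L, 0 < L ∧ Tendsto (qPoch Q) atTop (𝓝 L) ∧ ∀ n, L ≤ qPoch Q n := by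
  have ht : Tendsto (qPoch Q) atTop (𝓝 (∏' j : ℕ, (1 - Q * Q ^ j))) := by
    refine (multipliable_one_sub_geom h0 h1 Q).hasProd.tendsto_prod_nat.congr fun n => ?_
    simp [qPoch, pow_succ']
  refine ⟨_, tprod_one_sub_geom_pos h0 h1 h0 h1, ht, fun n => ?_⟩
  refine Antitone.le_of_tendsto (antitone_nat_of_succ_le fun n => ?_) ht n
  rw [qPoch, Finset.prod_range_succ]
  exact mul_le_of_le_one_right (qPoch_pos h0 h1 n).le (by linarith [pow_pos h0 (n + 1)])

/-- The Jacobi triple product up to the constant `L = 1 / (Q; Q)_∞`, which depends on `Q` only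
and cancels in quotients. -/
lemma exists_triple_product (h0 : 0 < Q) (h1 : Q < 1) :
    ∃ L : ℝ, 0 < L ∧ ∀ (x : ℝ) (w : ℤ → ℝ), x ≠ 0 → Summable w →
      (∀ k, w (k + 1) = -x * Q ^ k * w k) →
      L * ∑' k, w k = ((∏' j : ℕ, (1 - x * Q ^ j)) * ∏' j : ℕ, (1 - Q / x * Q ^ j)) * w 0 := by
  obtain ⟨L, hL, hlim, hle⟩ := exists_tendsto_qPoch h0 h1
  have hinv_nonneg (n : ℤ) : 0 ≤ invPoch Q n := by
    unfold invPoch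
    split_ifs
    exacts [(inv_pos.mpr (qPoch_pos h0 h1 _)).le, le_rfl]
  have hinv_le (n : ℤ) : invPoch Q n ≤ L⁻¹ := by
    unfold invPoch
    split_ifs
    exacts [inv_anti₀ hL (hle _), (inv_pos.mpr hL).le]
  have hle_one (n : ℕ) : qPoch Q n ≤ 1 :=
    Finset.prod_le_one (fun i _ => (one_sub_pow_pos h0 h1 i).le)
      fun i _ => by linarith [pow_pos h0 (i + 1)]
  have hinv_lim : Tendsto (invPoch Q) atTop (𝓝 L⁻¹) := by
    have htoNat : Tendsto Int.toNat atTop atTop :=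
      tendsto_atTop.mpr fun n => (eventually_ge_atTop (n : ℤ)).mono fun m hm => by omega
    refine ((hlim.comp htoNat).inv₀ hL.ne').congr' ?_
    filter_upwards [eventually_ge_atTop (0 : ℤ)] with n hn
    simp [invPoch, hn]
  refine ⟨L⁻¹, inv_pos.mpr hL, fun x w hx hsum hw => ?_⟩
  have hcoeff (k : ℤ) : Tendsto (fun N : ℕ => tripleCoeff Q N k) atTop (𝓝 L⁻¹) := by
    have hN := tendsto_natCast_atTop_atTop (R := ℤ)
    have hp : Tendsto (fun N : ℕ => qPoch Q (2 * N)) atTop (𝓝 L) :=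
      hlim.comp (tendsto_id.const_mul_atTop' two_pos)
    have hm : Tendsto (fun N : ℕ => invPoch Q (N - k)) atTop (𝓝 L⁻¹) :=
      hinv_lim.comp (tendsto_atTop_add_const_right _ (-k) hN)
    have hq : Tendsto (fun N : ℕ => invPoch Q (N + k)) atTop (𝓝 L⁻¹) :=
      hinv_lim.comp (tendsto_atTop_add_const_right _ k hN)
    simpa [tripleCoeff, hL.ne'] using (hp.mul hm).mul hq
  have hbound (N : ℕ) (k : ℤ) : ‖tripleCoeff Q N k * w k‖ ≤ L⁻¹ * L⁻¹ * ‖w k‖ := by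
    rw [norm_mul]
    gcongr
    have := hinv_nonneg (N - k)
    have := hinv_nonneg (N + k)
    have := (qPoch_pos h0 h1 (2 * N)).le
    rw [tripleCoeff, Real.norm_of_nonneg (by positivity), mul_assoc]
    refine (mul_le_of_le_one_left (by positivity) (hle_one _)).trans ?_
    gcongr <;> apply hinv_le
  have hleft : Tendsto (fun N : ℕ => ∑' k, tripleCoeff Q N k * w k) atTop
      (𝓝 (∑' k, L⁻¹ * w k)) :=
    tendsto_tsum_of_dominated_convergence (hsum.norm.mul_left (L⁻¹ * L⁻¹))
      (fun k => (hcoeff k).mul_const _) (.of_forall hbound)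
  have hright := (((multipliable_one_sub_geom h0 h1 x).hasProd.mul
    (multipliable_one_sub_geom h0 h1 (Q / x)).hasProd).tendsto_prod_nat).mul_const (w 0)
  rw [tsum_mul_left] at hleft
  refine tendsto_nhds_unique hleft (hright.congr fun N => ?_)
  rw [(finite_triple_product h0 h1 hx hw N).tsum_eq]
  congr 1
  refine Finset.prod_congr rfl fun j _ => ?_
  rw [pow_succ']
  ring
end

/-! ### The continued fraction as a quotient of theta values -/

/-- `∑ (-1)^k exp (-5πt (k + 3/10)²)`, written with Hurwitz kernels; see `tsum_altGauss_three`. -/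
noncomputable def thetaA (t : ℝ) : ℝ :=
  evenKernel ((3 / 20 : ℝ) : UnitAddCircle) (20 * t) -
    evenKernel ((13 / 20 : ℝ) : UnitAddCircle) (20 * t)

/-- `∑ (-1)^k exp (-5πt (k + 1/10)²)`, written with Hurwitz kernels; see `tsum_altGauss_one`. -/
noncomputable def thetaB (t : ℝ) : ℝ :=
  evenKernel ((1 / 20 : ℝ) : UnitAddCircle) (20 * t) -
    evenKernel ((11 / 20 : ℝ) : UnitAddCircle) (20 * t)

lemma altGauss_succ (a s : ℝ) (k : ℤ) :
    altGauss a s (k + 1) =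
      -rexp (-π * s * (1 + 2 * a)) * rexp (-2 * π * s) ^ k * altGauss a s k := by
  rw [altGauss, altGauss, zpow_add_one₀ (by norm_num), ← Real.rpow_intCast (rexp _),
    ← Real.exp_mul]
  have : rexp (-π * s * ((k + 1 : ℤ) + a) ^ 2) = rexp (-π * s * (1 + 2 * a)) *
      rexp (-2 * π * s * k) * rexp (-π * s * (k + a) ^ 2) := by
    rw [← Real.exp_add, ← Real.exp_add]
    congr 1
    push_cast
    ring
  rw [this]
  ring

lemma tsum_altGauss_three {t : ℝ} (ht : 0 < t) : ∑' k, altGauss (3 / 10) (5 * t) k = thetaA t := by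
  rw [(hasSum_altGauss (3 / 10) (by positivity : 0 < 5 * t)).tsum_eq, thetaA]
  norm_num [← mul_assoc]

lemma tsum_altGauss_one {t : ℝ} (ht : 0 < t) : ∑' k, altGauss (1 / 10) (5 * t) k = thetaB t := by
  rw [(hasSum_altGauss (1 / 10) (by positivity : 0 < 5 * t)).tsum_eq, thetaB]
  norm_num [← mul_assoc]

lemma rrcf_eq_tprod {q : ℝ} (h0 : 0 < q) (h1 : q < 1) :
    rrcf q = q ^ ((1 : ℝ) / 5) *
      (((∏' j : ℕ, (1 - q ^ 4 * (q ^ 5) ^ j)) * ∏' j : ℕ, (1 - q * (q ^ 5) ^ j)) /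
        ((∏' j : ℕ, (1 - q ^ 3 * (q ^ 5) ^ j)) * ∏' j : ℕ, (1 - q ^ 2 * (q ^ 5) ^ j))) := by
  have hQ0 : 0 < q ^ 5 := by positivity
  have hQ1 : q ^ 5 < 1 := pow_lt_one₀ h0.le h1 (by norm_num)
  have hm (x : ℝ) := (multipliable_one_sub_geom hQ0 hQ1 x).hasProd
  have h3 := tprod_one_sub_geom_pos hQ0 hQ1 (x := q ^ 3) (by positivity)
    (pow_lt_one₀ h0.le h1 (by norm_num))
  have h2 := tprod_one_sub_geom_pos hQ0 hQ1 (x := q ^ 2) (by positivity)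
    (pow_lt_one₀ h0.le h1 (by norm_num))
  have h := ((hm (q ^ 4)).mul (hm q)).div₀ ((hm (q ^ 3)).mul (hm (q ^ 2))) (by positivity)
  rw [rrcf, ← h.tprod_eq]
  congr 1
  refine tprod_congr fun n => ?_
  rw [show 5 * (n + 1) - 1 = 4 + 5 * n by omega, show 5 * (n + 1) - 4 = 1 + 5 * n by omega,
    show 5 * (n + 1) - 2 = 3 + 5 * n by omega, show 5 * (n + 1) - 3 = 2 + 5 * n by omega]
  simp only [pow_add, pow_mul, pow_one]

lemma rrcf_exp_eq {t : ℝ} (ht : 0 < t) :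
    0 < thetaB t ∧ rrcf (rexp (-2 * π * t)) = thetaA t / thetaB t := by
  set q := rexp (-2 * π * t) with hq
  have h0 : 0 < q := Real.exp_pos _
  have h1 : q < 1 := Real.exp_lt_one_iff.mpr (by nlinarith [mul_pos pi_pos ht])
  have hs : 0 < 5 * t := by positivity
  have hQ0 : 0 < q ^ 5 := by positivity
  have hQ1 : q ^ 5 < 1 := pow_lt_one₀ h0.le h1 (by norm_num)
  have hQ : rexp (-2 * π * (5 * t)) = q ^ 5 := by
    rw [hq, ← Real.exp_nat_mul]; congr 1; push_cast; ring
  have hx4 : rexp (-π * (5 * t) * (1 + 2 * (3 / 10))) = q ^ 4 := by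
    rw [hq, ← Real.exp_nat_mul]; congr 1; push_cast; ring
  have hx3 : rexp (-π * (5 * t) * (1 + 2 * (1 / 10))) = q ^ 3 := by
    rw [hq, ← Real.exp_nat_mul]; congr 1; push_cast; ring
  -- The triple products for `x = q ^ 4` and `x = q ^ 3` are the numerator and the denominator.
  obtain ⟨L, hL, hprod⟩ := exists_triple_product hQ0 hQ1
  have hA := hprod (q ^ 4) (altGauss (3 / 10) (5 * t)) (by positivity)
    (hasSum_altGauss _ hs).summable fun k => by rw [altGauss_succ, hQ, hx4]
  have hB := hprod (q ^ 3) (altGauss (1 / 10) (5 * t)) (by positivity)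
    (hasSum_altGauss _ hs).summable fun k => by rw [altGauss_succ, hQ, hx3]
  rw [tsum_altGauss_three ht, show q ^ 5 / q ^ 4 = q by field_simp] at hA
  rw [tsum_altGauss_one ht, show q ^ 5 / q ^ 3 = q ^ 2 by field_simp] at hB
  have hp (m : ℕ) (hm : m ≠ 0) : 0 < ∏' j : ℕ, (1 - q ^ m * (q ^ 5) ^ j) :=
    tprod_one_sub_geom_pos hQ0 hQ1 (by positivity) (pow_lt_one₀ h0.le h1 hm)
  have h3 := hp 3 (by norm_num)
  have h2 := hp 2 (by norm_num)
  have hw0 : 0 < altGauss (1 / 10) (5 * t) 0 := by simp [altGauss, Real.exp_pos]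
  have hBpos : 0 < thetaB t := by
    refine pos_of_mul_pos_right (a := L) ?_ hL.le
    rw [hB]
    positivity
  refine ⟨hBpos, ?_⟩
  have hw : altGauss (3 / 10) (5 * t) 0 = q ^ ((1 : ℝ) / 5) * altGauss (1 / 10) (5 * t) 0 := by
    simp only [altGauss, zpow_zero, one_mul]
    rw [hq, ← Real.exp_mul, ← Real.exp_add]
    congr 1
    push_cast
    ring
  rw [rrcf_eq_tprod h0 h1, ← mul_div_mul_left (thetaA t) _ hL.ne', hA, hB, hw]
  field_simp

/-! ### The inversion `t ↦ 1 / t` -/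

/-- Poisson summation followed by the splitting modulo `20`: inversion acts on the twenty kernels
`evenKernel (j / 20)` by a cosine matrix. -/
lemma evenKernel_eq_sum (c : ℤ) {t : ℝ} (ht : 0 < t) :
    evenKernel ((c / 20 : ℝ) : UnitAddCircle) (20 * (1 / t)) = 1 / (20 * (1 / t)) ^ (1 / 2 : ℝ) *
      ∑ j : Fin 20, Real.cos (π * c * (j : ℕ) / 10) *
        evenKernel (((j : ℕ) / 20 : ℝ) : UnitAddCircle) (20 * t) := by
  have h : 1 / (20 * (1 / t)) = t / 20 := by field_simp
  rw [evenKernel_functional_equation, h, cosKernel_eq_sum c (by positivity),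
    show 400 * (t / 20) = 20 * t by ring]

lemma evenKernel_reflect (j : ℕ) (x : ℝ) :
    evenKernel (((20 - j) / 20 : ℝ) : UnitAddCircle) x =
      evenKernel ((j / 20 : ℝ) : UnitAddCircle) x := by
  rw [← evenKernel_neg, ← AddCircle.coe_neg, ← AddCircle.coe_add_period]
  congr 2
  ring

lemma cos_shift {m r : ℝ} (k : ℤ) (h : m = r + 20 * k) :
    Real.cos (π * m / 10) = Real.cos (π * r / 10) := by
  rw [← Real.cos_add_int_mul_two_pi (π * r / 10) k, h]
  congr 1
  ring

lemma cos_flip {m r : ℝ} (k : ℤ) (h : m = 10 - r + 20 * k) :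
    Real.cos (π * m / 10) = -Real.cos (π * r / 10) := by
  rw [cos_shift k h, ← Real.cos_pi_sub]
  congr 1
  ring

/-- In the alternating combination only the odd residues `2j + 1` survive, because
`cos (π(c + 10)j/10) = (-1)^j cos (πcj/10)`. -/
lemma evenKernel_sub_eq (c : ℤ) {t : ℝ} (ht : 0 < t) :
    evenKernel ((c / 20 : ℝ) : UnitAddCircle) (20 * (1 / t)) -
      evenKernel (((c + 10 : ℤ) / 20 : ℝ) : UnitAddCircle) (20 * (1 / t)) =
    2 / (20 * (1 / t)) ^ (1 / 2 : ℝ) *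
      ∑ j : Fin 10, Real.cos (π * c * (2 * (j : ℕ) + 1) / 10) *
        evenKernel (((2 * (j : ℕ) + 1) / 20 : ℝ) : UnitAddCircle) (20 * t) := by
  have hodd (j : ℕ) : Real.cos (π * (c + 10 : ℤ) * j / 10) =
      (-1) ^ j * Real.cos (π * c * j / 10) := by
    rw [← Real.cos_add_nat_mul_pi]
    congr 1
    push_cast
    ring
  rw [evenKernel_eq_sum c ht, evenKernel_eq_sum (c + 10) ht, ← mul_sub, ← Finset.sum_sub_distrib]
  simp only [hodd]
  simp only [Fin.sum_univ_succ, Fin.val_succ, Fin.val_zero, Finset.univ_eq_empty,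
    Finset.sum_empty]
  norm_num
  ring

lemma cos_reflect {m r : ℝ} (k : ℤ) (h : m = 20 * k - r) :
    Real.cos (π * m / 10) = Real.cos (π * r / 10) := by
  rw [cos_shift (r := -r) k (by rw [h]; ring), ← Real.cos_neg]
  congr 1
  ring

lemma cos_flip' {m r : ℝ} (k : ℤ) (h : m = 10 + r + 20 * k) :
    Real.cos (π * m / 10) = -Real.cos (π * r / 10) := by
  rw [cos_flip (r := -r) k (by rw [h]; ring), ← Real.cos_neg (π * r / 10)]
  congr 2
  ring

lemma cos_quarter {m : ℝ} (k : ℤ) (h : m = 5 + 10 * k) : Real.cos (π * m / 10) = 0 := by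
  rw [Real.cos_eq_zero_iff]
  exact ⟨k, by rw [h]; ring⟩

lemma thetaB_inv {t : ℝ} (ht : 0 < t) :
    thetaB (1 / t) = 4 / (20 * (1 / t)) ^ (1 / 2 : ℝ) *
      (Real.cos (π * 1 / 10) * thetaB t + Real.cos (π * 3 / 10) * thetaA t) := by
  have h := evenKernel_sub_eq 1 ht
  have r11 := evenKernel_reflect 9 (20 * t)
  have r13 := evenKernel_reflect 7 (20 * t)
  have r17 := evenKernel_reflect 3 (20 * t)
  have r19 := evenKernel_reflect 1 (20 * t)
  have c5 : Real.cos (π * 5 / 10) = 0 := cos_quarter 0 (by norm_num)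
  have c7 : Real.cos (π * 7 / 10) = -Real.cos (π * 3 / 10) := cos_flip 0 (by norm_num)
  have c9 : Real.cos (π * 9 / 10) = -Real.cos (π * 1 / 10) := cos_flip 0 (by norm_num)
  have c11 : Real.cos (π * 11 / 10) = -Real.cos (π * 1 / 10) := cos_flip' 0 (by norm_num)
  have c13 : Real.cos (π * 13 / 10) = -Real.cos (π * 3 / 10) := cos_flip' 0 (by norm_num)
  have c15 : Real.cos (π * 15 / 10) = 0 := cos_quarter 1 (by norm_num)
  have c17 : Real.cos (π * 17 / 10) = Real.cos (π * 3 / 10) := cos_reflect 1 (by norm_num)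
  have c19 : Real.cos (π * 19 / 10) = Real.cos (π * 1 / 10) := cos_reflect 1 (by norm_num)
  simp only [Fin.sum_univ_succ, Fin.val_succ, Fin.val_zero, Finset.univ_eq_empty,
    Finset.sum_empty, mul_assoc] at h
  norm_num at h r11 r13 r17 r19 c5 c7 c9 c11 c13 c15 c17 c19
  simp only [c5, c7, c9, c11, c13, c15, c17, c19, r17, r19] at h
  simp only [thetaB, thetaA, one_div t, mul_one]
  rw [h, r11, r13]
  ring

lemma thetaA_inv {t : ℝ} (ht : 0 < t) :
    thetaA (1 / t) = 4 / (20 * (1 / t)) ^ (1 / 2 : ℝ) *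
      (Real.cos (π * 3 / 10) * thetaB t - Real.cos (π * 1 / 10) * thetaA t) := by
  have h := evenKernel_sub_eq 3 ht
  have r11 := evenKernel_reflect 9 (20 * t)
  have r13 := evenKernel_reflect 7 (20 * t)
  have r17 := evenKernel_reflect 3 (20 * t)
  have r19 := evenKernel_reflect 1 (20 * t)
  have c3 : Real.cos (π * 9 / 10) = -Real.cos (π * 1 / 10) := cos_flip 0 (by norm_num)
  have c5 : Real.cos (π * 15 / 10) = 0 := cos_quarter 1 (by norm_num)
  have c7 : Real.cos (π * 21 / 10) = Real.cos (π * 1 / 10) := cos_shift 1 (by norm_num)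
  have c9 : Real.cos (π * 27 / 10) = -Real.cos (π * 3 / 10) := cos_flip 1 (by norm_num)
  have c11 : Real.cos (π * 33 / 10) = -Real.cos (π * 3 / 10) := cos_flip' 1 (by norm_num)
  have c13 : Real.cos (π * 39 / 10) = Real.cos (π * 1 / 10) := cos_reflect 2 (by norm_num)
  have c15 : Real.cos (π * 45 / 10) = 0 := cos_quarter 4 (by norm_num)
  have c17 : Real.cos (π * 51 / 10) = -Real.cos (π * 1 / 10) := cos_flip' 2 (by norm_num)
  have c19 : Real.cos (π * 57 / 10) = Real.cos (π * 3 / 10) := cos_reflect 3 (by norm_num)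
  simp only [Fin.sum_univ_succ, Fin.val_succ, Fin.val_zero, Finset.univ_eq_empty,
    Finset.sum_empty, mul_assoc] at h
  norm_num at h r11 r13 r17 r19 c3 c5 c7 c9 c11 c13 c15 c17 c19
  simp only [c3, c5, c7, c9, c11, c13, c15, c17, c19, r17, r19] at h
  simp only [thetaB, thetaA, one_div t, mul_one]
  rw [h, r11, r13]
  ring

lemma cos_three_pi_div_ten : Real.cos (π * 3 / 10) = -alphaRR * Real.cos (π * 1 / 10) := by
  have h := Real.cos_three_mul (π * 1 / 10)
  have h2 := Real.cos_two_mul (π * 1 / 10)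
  rw [show 2 * (π * 1 / 10) = π / 5 by ring, Real.cos_pi_div_five] at h2
  rw [show 3 * (π * 1 / 10) = π * 3 / 10 by ring] at h
  rw [h, alphaRR]
  linear_combination -2 * Real.cos (π * 1 / 10) * h2

theorem rrcf_modular_relation (b : ℝ) (hb : 0 < b) :
    rrcf (Real.exp (-2 * Real.pi / b)) =
      (-alphaRR) *
        ((1 - betaRR * rrcf (Real.exp (-2 * Real.pi * b))) /
          (1 - alphaRR * rrcf (Real.exp (-2 * Real.pi * b)))) := by
  obtain ⟨hB, hR⟩ := rrcf_exp_eq hb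
  obtain ⟨hB', hR'⟩ := rrcf_exp_eq (one_div_pos.mpr hb)
  have hc : 0 < Real.cos (π * 1 / 10) :=
    Real.cos_pos_of_mem_Ioo ⟨by linarith [pi_pos], by linarith [pi_pos]⟩
  have hk : 0 < 4 / (20 * (1 / b)) ^ (1 / 2 : ℝ) := by positivity
  have hαβ : alphaRR * betaRR = -1 := by
    have h5 : √5 * √5 = 5 := Real.mul_self_sqrt (by norm_num)
    rw [alphaRR, betaRR]
    linear_combination -(1 / 4) * h5
  rw [show -2 * π / b = -2 * π * (1 / b) by ring, hR', hR]
  rw [thetaB_inv hb, cos_three_pi_div_ten] at hB' ⊢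
  rw [thetaA_inv hb, cos_three_pi_div_ten]
  have hden : thetaB b - alphaRR * thetaA b ≠ 0 := by
    intro h0
    refine hB'.ne' ?_
    linear_combination 4 / (20 * (1 / b)) ^ (1 / 2 : ℝ) * Real.cos (π * 1 / 10) * h0
  rw [mul_div_mul_left _ _ hk.ne',
    show -alphaRR * cos (π * 1 / 10) * thetaB b - cos (π * 1 / 10) * thetaA b =
      cos (π * 1 / 10) * (-alphaRR * thetaB b - thetaA b) by ring,
    show cos (π * 1 / 10) * thetaB b + -alphaRR * cos (π * 1 / 10) * thetaA b =
      cos (π * 1 / 10) * (thetaB b - alphaRR * thetaA b) by ring,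
    mul_div_mul_left _ _ hc.ne']
  have hden' : 1 - alphaRR * (thetaA b / thetaB b) ≠ 0 := by
    rw [show 1 - alphaRR * (thetaA b / thetaB b) = (thetaB b - alphaRR * thetaA b) / thetaB b by
      field_simp]
    exact div_ne_zero hden hB.ne'
  rw [mul_div_assoc', div_eq_div_iff hden hden']
  field_simp
  linear_combination -thetaA b * hαβ
end
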